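/- Disjunctive normal form in PPL: for every PPL formula φ there is a PPL formula ψ that is a disjunction of conjunctions of PPL literals (atomic PPL formulas ⟦α⟧ ∘ t or negations thereof) such that ⊢ φ ↔ ψ in the PPL calculus; moreover, if φ is consistent (i.e., not φ ⊢ ⊥, where ⊥ abbreviates ⟦⊤⟧ < 1), then at least one disjunct of ψ is consistent. -/

import Mathlib

open MeasureTheory

/-- Propositional formulas over atoms `B_j`, `j : ℕ`, with `¬` and `→`. -/
inductive PropForm : Type
  | atom : ℕ → PropForm
  | neg : PropForm → PropForm
  | imp : PropForm → PropForm → PropForm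
  deriving DecidableEq

namespace PropForm

def conj (α β : PropForm) : PropForm := neg (imp α (neg β))
def disj (α β : PropForm) : PropForm := imp (neg α) β
def biimp (α β : PropForm) : PropForm := conj (imp α β) (imp β α)
def top : PropForm := imp (atom 0) (atom 0)
def bot : PropForm := neg top

/-- Satisfaction of a formula by a valuation `v : ℕ → Bool` (a subset of ℕ). -/
def sat (v : ℕ → Bool) : PropForm → Prop
  | atom j => v j = true
  | neg α => ¬ sat v α
  | imp α β => sat v α → sat v β

/-- The finite set `B_α` of indices of atoms occurring in `α`. -/
def atoms : PropForm → Finset ℕ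
  | atom j => {j}
  | neg α => atoms α
  | imp α β => atoms α ∪ atoms β

end PropForm

/-- `⊨ α`: every valuation satisfies `α`. -/
def Valid (α : PropForm) : Prop := ∀ v, PropForm.sat v α

/-- `α ⊨ β`. -/
def Entails (α β : PropForm) : Prop := ∀ v, PropForm.sat v α → PropForm.sat v β

/-- `Δ ⊨ α`. -/
def SetEntails (Δ : Set PropForm) (α : PropForm) : Prop :=
  ∀ v, (∀ δ ∈ Δ, PropForm.sat v δ) → PropForm.sat v α

/-- Conjunction of a list of formulas (empty conjunction is `⊤`). -/
def bigConj (l : List PropForm) : PropForm := l.foldr PropForm.conj PropForm.top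

/-- Disjunction of a list of formulas (empty disjunction is `⊥`). -/
def bigDisj (l : List PropForm) : PropForm := l.foldr PropForm.disj PropForm.bot

/-- `φ_A^U = (⋀_{j∈U} B_j) ∧ (⋀_{j∈A∖U} ¬B_j)`. -/
def phi (A U : Finset ℕ) : PropForm :=
  PropForm.conj (bigConj ((U.sort (· ≤ ·)).map PropForm.atom))
    (bigConj (((A \ U).sort (· ≤ ·)).map (fun j => PropForm.neg (PropForm.atom j))))

/-- The space of valuations, `2^ℕ` identified with `{0,1}^ℕ`, with the product σ-algebra. -/
abbrev Val := ℕ → Bool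

/-- `v ∩ A` for a valuation `v` and a finite `A ⊆ ℕ`. -/
def restrict (v : Val) (A : Finset ℕ) : Finset ℕ := A.filter (fun j => v j = true)

/-- `Prob_μ(α) = μ{v : v ⊨ α}`. -/
noncomputable def Prob (μ : Measure Val) (α : PropForm) : ℝ :=
  (μ {v | PropForm.sat v α}).toReal

/-! ## PPL: probabilistic propositional logic -/

/-- RCOF variables: `x_k` for `k ∈ ℕ` and `x_α` for propositional formulas `α`. -/
inductive RVar : Type
  | num : ℕ → RVar
  | fm : PropForm → RVar
  deriving DecidableEq

/-- RCOF terms: built from 0, 1, variables, unary `-`, binary `+` and `×`. -/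
inductive RTerm : Type
  | zero : RTerm
  | one : RTerm
  | var : RVar → RTerm
  | neg : RTerm → RTerm
  | add : RTerm → RTerm → RTerm
  | mul : RTerm → RTerm → RTerm
  deriving DecidableEq

/-- Value of a term in `ℝ` under an assignment. -/
def RTerm.eval (ρ : RVar → ℝ) : RTerm → ℝ
  | zero => 0
  | one => 1
  | var x => ρ x
  | neg t => - t.eval ρ
  | add t s => t.eval ρ + s.eval ρ
  | mul t s => t.eval ρ * s.eval ρ

/-- PPL formulas: atoms `⟦α⟧ = t` and `⟦α⟧ < t`, closed under implication. -/
inductive PPLForm : Type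
  | eq : PropForm → RTerm → PPLForm
  | lt : PropForm → RTerm → PPLForm
  | imp : PPLForm → PPLForm → PPLForm
  deriving DecidableEq

/-- `⊥` in PPL: `⟦⊤⟧ < 1`. -/
def pbot : PPLForm := PPLForm.lt PropForm.top RTerm.one

/-- `¬φ` in PPL: `φ → (⟦⊤⟧ < 1)`. -/
def pneg (φ : PPLForm) : PPLForm := PPLForm.imp φ pbot

/-- `φ ∧ ψ` in PPL. -/
def pconj (φ ψ : PPLForm) : PPLForm := pneg (PPLForm.imp φ (pneg ψ))

/-- `φ ∨ ψ` in PPL. -/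
def pdisj (φ ψ : PPLForm) : PPLForm := PPLForm.imp (pneg φ) ψ

/-- `φ ↔ ψ` in PPL. -/
def piff (φ ψ : PPLForm) : PPLForm := pconj (PPLForm.imp φ ψ) (PPLForm.imp ψ φ)

/-- Conjunction of a nonempty list of PPL formulas (empty list gives `⟦⊤⟧ = 1`). -/
def pBigConj : List PPLForm → PPLForm
  | [] => PPLForm.eq PropForm.top RTerm.one
  | [φ] => φ
  | φ :: l => pconj φ (pBigConj l)

/-- Disjunction of a nonempty list of PPL formulas (empty list gives `⊥`). -/
def pBigDisj : List PPLForm → PPLForm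
  | [] => pbot
  | [φ] => φ
  | φ :: l => pdisj φ (pBigDisj l)

/-- Satisfaction of a PPL formula by a stochastic valuation `μ` and an assignment `ρ`. -/
def PPLForm.sat (μ : MeasureTheory.Measure Val) (ρ : RVar → ℝ) : PPLForm → Prop
  | eq α t => Prob μ α = t.eval ρ
  | lt α t => Prob μ α < t.eval ρ
  | imp φ ψ => φ.sat μ ρ → ψ.sat μ ρ

/-- `Γ ⊨ φ` in PPL. -/
def PPLentails (Γ : Set PPLForm) (φ : PPLForm) : Prop :=
  ∀ μ : MeasureTheory.Measure Val, MeasureTheory.IsProbabilityMeasure μ →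
    ∀ ρ : RVar → ℝ, (∀ γ ∈ Γ, PPLForm.sat μ ρ γ) → PPLForm.sat μ ρ φ

/-- Boolean evaluation of a PPL formula given truth values for its atomic subformulas. -/
def PPLForm.evalAtoms (w : PPLForm → Bool) : PPLForm → Bool
  | imp φ ψ => !(φ.evalAtoms w) || ψ.evalAtoms w
  | φ => w φ

/-- Tautological PPL formulas: true under every assignment of truth values to atomic
PPL formulas; these are exactly the PPL-substitution-instances of classical tautologies. -/
def PPLTaut (φ : PPLForm) : Prop := ∀ w : PPLForm → Bool, φ.evalAtoms w = true

/-- Literals of classical propositional logic. -/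
def IsLiteral (α : PropForm) : Prop :=
  (∃ j, α = PropForm.atom j) ∨ (∃ j, α = PropForm.neg (PropForm.atom j))

/-- Conjunctions of literals. -/
inductive IsLitConj : PropForm → Prop
  | lit {α} : IsLiteral α → IsLitConj α
  | conj {α β} : IsLitConj α → IsLitConj β → IsLitConj (PropForm.conj α β)

/-- `B_Λ`, the union of the atom sets of the formulas `α j`. -/
def BigB {k : ℕ} (α : Fin k → PropForm) : Finset ℕ :=
  Finset.univ.sup fun j => (α j).atoms

/-- `Λ = {c j ℓ}` is an adequate set of DNF-conjuncts for `{α j}`. -/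
structure AdequateDNF {k : ℕ} (α : Fin k → PropForm) (m : Fin k → ℕ)
    (c : (j : Fin k) → Fin (m j) → PropForm) : Prop where
  atoms_eq : ∀ j ℓ, (c j ℓ).atoms = BigB α
  litconj : ∀ j ℓ, IsLitConj (c j ℓ)
  pairwise_incons : ∀ j, ∀ ℓ ℓ' : Fin (m j), ℓ ≠ ℓ' →
      Valid (PropForm.neg (PropForm.conj (c j ℓ) (c j ℓ')))
  equiv : ∀ j, Valid (PropForm.biimp (α j) (bigDisj (List.ofFn (c j))))

/-- The RCOF formula `Q^{α_1,…,α_k}_Λ` holding in `ℝ` under the assignment `ρ`. -/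
def Qcond {k : ℕ} (α : Fin k → PropForm) (m : Fin k → ℕ)
    (c : (j : Fin k) → Fin (m j) → PropForm) (ρ : RVar → ℝ) : Prop :=
  (∀ U ∈ (BigB α).powerset,
      0 ≤ ρ (RVar.fm (phi (BigB α) U)) ∧ ρ (RVar.fm (phi (BigB α) U)) ≤ 1) ∧
  (∑ U ∈ (BigB α).powerset, ρ (RVar.fm (phi (BigB α) U))) = 1 ∧
  (∀ j, ρ (RVar.fm (α j)) = ∑ ℓ : Fin (m j), ρ (RVar.fm (c j ℓ)))

/-- `x ∘ y` where `∘` is `=` if `b` and `<` otherwise. -/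
def rcmp (b : Bool) (x y : ℝ) : Prop := if b then x = y else x < y

/-- The PPL atom `⟦α⟧ ∘ t` where `∘` is `=` if `b` and `<` otherwise. -/
def patom (b : Bool) (α : PropForm) (t : RTerm) : PPLForm :=
  if b then PPLForm.eq α t else PPLForm.lt α t

/-- Side condition of the RR axioms: there is an adequate set of DNF-conjuncts for
`{α_1,…,α_{k+1}}` such that the universal closure of
`(Q ∧ ⋀_{j≤k} x_{α_j} ∘_j t_j) → x_{α_{k+1}} ∘_{k+1} t_{k+1}` holds in `ℝ`. -/
def RRside {k : ℕ} (α : Fin (k + 1) → PropForm) (isEq : Fin (k + 1) → Bool)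
    (t : Fin (k + 1) → RTerm) : Prop :=
  ∃ (m : Fin (k + 1) → ℕ) (c : (j : Fin (k + 1)) → Fin (m j) → PropForm),
    AdequateDNF α m c ∧
    ∀ ρ : RVar → ℝ, Qcond α m c ρ →
      (∀ j : Fin k, rcmp (isEq j.castSucc) (ρ (RVar.fm (α j.castSucc)))
          ((t j.castSucc).eval ρ)) →
      rcmp (isEq (Fin.last k)) (ρ (RVar.fm (α (Fin.last k)))) ((t (Fin.last k)).eval ρ)

/-- The RR axiom `(⟦α_1⟧ ∘_1 t_1 ∧ … ∧ ⟦α_k⟧ ∘_k t_k) → ⟦α_{k+1}⟧ ∘_{k+1} t_{k+1}`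
(for `k = 0` it is just the conclusion). -/
def rrFormula {k : ℕ} (α : Fin (k + 1) → PropForm) (isEq : Fin (k + 1) → Bool)
    (t : Fin (k + 1) → RTerm) : PPLForm :=
  match k with
  | 0 => patom (isEq (Fin.last 0)) (α (Fin.last 0)) (t (Fin.last 0))
  | k + 1 => PPLForm.imp
      (pBigConj (List.ofFn fun j : Fin (k + 1) =>
        patom (isEq j.castSucc) (α j.castSucc) (t j.castSucc)))
      (patom (isEq (Fin.last (k + 1))) (α (Fin.last (k + 1))) (t (Fin.last (k + 1))))

/-- The PPL calculus: hypotheses, TAUT, RR and modus ponens. -/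
inductive PPLderiv (Γ : Set PPLForm) : PPLForm → Prop
  | hyp {φ} : φ ∈ Γ → PPLderiv Γ φ
  | taut {φ} : PPLTaut φ → PPLderiv Γ φ
  | rr {k : ℕ} (α : Fin (k + 1) → PropForm) (isEq : Fin (k + 1) → Bool)
      (t : Fin (k + 1) → RTerm) :
      RRside α isEq t → PPLderiv Γ (rrFormula α isEq t)
  | mp {φ ψ} : PPLderiv Γ (PPLForm.imp φ ψ) → PPLderiv Γ φ → PPLderiv Γ ψ

/-- Atomic PPL formulas `⟦α⟧ = t` or `⟦α⟧ < t`. -/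
def IsPPLAtomic (φ : PPLForm) : Prop :=
  ∃ α t, φ = PPLForm.eq α t ∨ φ = PPLForm.lt α t

/-- PPL literals: atomic PPL formulas or negations thereof. -/
def IsPPLLiteral (φ : PPLForm) : Prop :=
  IsPPLAtomic φ ∨ ∃ χ, IsPPLAtomic χ ∧ φ = pneg χ

/-!
Pushing negations inwards turns an implication into the disjunction of the normal forms of the
negated premise and of the conclusion, and a negated implication into a distributed product; this
is a purely truth-functional process, so TAUT proves the equivalence. For the same reason a
disjunction is refutable exactly when each disjunct is, and by the deduction theorem refutability
of `χ` is inconsistency of `{χ}`.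

In the calculus `⊥` is an ordinary atom `⟦⊤⟧ < 1`, which a truth assignment may make true. The
equivalence and the refutations are negations, hence automatically true under such an assignment,
while under the others the connectives have their classical meaning.
-/

section

variable {Γ : Set PPLForm} {φ ψ χ : PPLForm} {l : List PPLForm} {w : PPLForm → Bool}

theorem evalAtoms_imp (w : PPLForm → Bool) (φ ψ : PPLForm) :
    (φ.imp ψ).evalAtoms w = (!φ.evalAtoms w || ψ.evalAtoms w) := rfl

theorem evalAtoms_pneg (w : PPLForm → Bool) (φ : PPLForm) :
    (pneg φ).evalAtoms w = (!φ.evalAtoms w || w pbot) := rfl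

theorem evalAtoms_pconj (hw : w pbot = false) (φ ψ : PPLForm) :
    (pconj φ ψ).evalAtoms w = (φ.evalAtoms w && ψ.evalAtoms w) := by
  simp [pconj, evalAtoms_pneg, evalAtoms_imp, hw]

theorem evalAtoms_pdisj (hw : w pbot = false) (φ ψ : PPLForm) :
    (pdisj φ ψ).evalAtoms w = (φ.evalAtoms w || ψ.evalAtoms w) := by
  simp [pdisj, evalAtoms_pneg, evalAtoms_imp, hw]

theorem evalAtoms_piff (hw : w pbot = false) (φ ψ : PPLForm) :
    (piff φ ψ).evalAtoms w = (φ.evalAtoms w == ψ.evalAtoms w) := by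
  rw [piff, evalAtoms_pconj hw, evalAtoms_imp, evalAtoms_imp]
  cases φ.evalAtoms w <;> cases ψ.evalAtoms w <;> rfl

theorem evalAtoms_pBigConj (hw : w pbot = false) :
    ∀ {l : List PPLForm}, l ≠ [] → (pBigConj l).evalAtoms w = l.all (·.evalAtoms w)
  | [_], _ => by simp [pBigConj]
  | φ :: ψ :: l, _ => by
    change (pconj φ (pBigConj (ψ :: l))).evalAtoms w = _
    rw [evalAtoms_pconj hw, evalAtoms_pBigConj hw (List.cons_ne_nil ψ l), List.all_cons (a := φ)]

theorem evalAtoms_pBigDisj (hw : w pbot = false) :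
    ∀ l : List PPLForm, (pBigDisj l).evalAtoms w = l.any (·.evalAtoms w)
  | [] => hw
  | [_] => by simp [pBigDisj]
  | φ :: ψ :: l => by
    change (pdisj φ (pBigDisj (ψ :: l))).evalAtoms w = _
    rw [evalAtoms_pdisj hw, evalAtoms_pBigDisj hw (ψ :: l), List.any_cons (a := φ)]

theorem pplTaut_pneg (h : ∀ w, w pbot = false → φ.evalAtoms w = false) : PPLTaut (pneg φ) := by
  intro w
  cases hw : w pbot <;> simp [evalAtoms_pneg, hw, h w]

theorem pplTaut_piff (h : ∀ w, w pbot = false → φ.evalAtoms w = ψ.evalAtoms w) :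
    PPLTaut (piff φ ψ) := by
  refine pplTaut_pneg fun w hw => ?_
  simp [evalAtoms_imp, evalAtoms_pneg, hw, h w hw]

namespace PPLderiv

theorem of_taut_consequence (hl : ∀ χ ∈ l, PPLderiv Γ χ)
    (h : ∀ w, (∀ χ ∈ l, χ.evalAtoms w = true) → φ.evalAtoms w = true) : PPLderiv Γ φ := by
  induction l generalizing φ with
  | nil => exact .taut fun w => h w (by simp)
  | cons χ l ih =>
    obtain ⟨hχ, hl⟩ := List.forall_mem_cons.1 hl
    refine .mp (ih hl fun w hw => ?_) hχ
    cases hχw : χ.evalAtoms w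
    · simp [evalAtoms_imp, hχw]
    · simp [evalAtoms_imp, h w (List.forall_mem_cons.2 ⟨hχw, hw⟩)]

theorem mono {Δ : Set PPLForm} (hΓΔ : Γ ⊆ Δ) (h : PPLderiv Γ φ) : PPLderiv Δ φ := by
  induction h with
  | hyp h => exact .hyp (hΓΔ h)
  | taut h => exact .taut h
  | rr α isEq t h => exact .rr α isEq t h
  | mp _ _ ihimp ih => exact .mp ihimp ih

theorem imp_of_right (φ : PPLForm) (h : PPLderiv Γ ψ) : PPLderiv Γ (φ.imp ψ) :=
  of_taut_consequence (l := [ψ]) (by simpa using h) fun w hw => by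
    simp [evalAtoms_imp, List.forall_mem_singleton.1 hw]

theorem deduction (h : PPLderiv (insert φ Γ) ψ) : PPLderiv Γ (φ.imp ψ) := by
  induction h with
  | hyp h =>
    obtain rfl | h := h
    · exact .taut fun w => by simp [evalAtoms_imp]
    · exact imp_of_right φ (.hyp h)
  | taut h => exact imp_of_right φ (.taut h)
  | rr α isEq t h => exact imp_of_right φ (.rr α isEq t h)
  | @mp χ ψ _ _ ihimp ih =>
    refine of_taut_consequence (l := [φ.imp (χ.imp ψ), φ.imp χ]) (by simp [ihimp, ih]) ?_
    intro w
    cases hφ : φ.evalAtoms w <;> cases hχ : χ.evalAtoms w <;> simp [evalAtoms_imp, hφ, hχ]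

theorem imp_iff_insert : PPLderiv Γ (φ.imp ψ) ↔ PPLderiv (insert φ Γ) ψ :=
  ⟨fun h => .mp (h.mono (Set.subset_insert φ Γ)) (.hyp (Set.mem_insert φ Γ)), deduction⟩

theorem pneg_iff_singleton : PPLderiv ∅ (pneg φ) ↔ PPLderiv {φ} pbot := by
  rw [pneg, imp_iff_insert, insert_empty_eq]

theorem piff_symm (h : PPLderiv Γ (piff φ ψ)) : PPLderiv Γ (piff ψ φ) := by
  refine of_taut_consequence (l := [piff φ ψ]) (by simpa using h) fun w => ?_
  cases hw : w pbot
  · simpa [evalAtoms_piff, hw] using Eq.symm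
  · simp [piff, pconj, evalAtoms_pneg, hw]

theorem pneg_of_piff (h : PPLderiv Γ (piff φ ψ)) (hφ : PPLderiv Γ (pneg φ)) :
    PPLderiv Γ (pneg ψ) := by
  refine of_taut_consequence (l := [piff φ ψ, pneg φ]) (by simp [h, hφ]) fun w => ?_
  cases hw : w pbot <;> simp +contextual [evalAtoms_pneg, evalAtoms_piff, hw]

theorem pneg_congr (h : PPLderiv Γ (piff φ ψ)) : PPLderiv Γ (pneg φ) ↔ PPLderiv Γ (pneg ψ) :=
  ⟨pneg_of_piff h, pneg_of_piff h.piff_symm⟩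

theorem pneg_pBigDisj_iff :
    PPLderiv Γ (pneg (pBigDisj l)) ↔ ∀ χ ∈ l, PPLderiv Γ (pneg χ) := by
  constructor
  · intro h χ hχ
    refine of_taut_consequence (l := [pneg (pBigDisj l)]) (by simpa using h) fun w => ?_
    cases hw : w pbot
    · simp +contextual [evalAtoms_pneg, evalAtoms_pBigDisj, hw, hχ]
    · simp [evalAtoms_pneg, hw]
  · intro h
    refine of_taut_consequence (l := l.map pneg) (by simpa using h) fun w => ?_
    cases hw : w pbot <;> simp [evalAtoms_pneg, evalAtoms_pBigDisj, hw]

end PPLderiv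

namespace PPLForm

/-- The conjuncts, as lists of literals, of the disjunctive normal form of `φ` (sign `true`) or of
`¬φ` (sign `false`). Carrying the sign makes the recursion structural although each implication
switches the sign of its premise. -/
def signedDNF : Bool → PPLForm → List (List PPLForm)
  | true, imp φ ψ => signedDNF false φ ++ signedDNF true ψ
  | false, imp φ ψ => (signedDNF true φ).flatMap fun l => (signedDNF false ψ).map (l ++ ·)
  | true, φ => [[φ]]
  | false, φ => [[pneg φ]]

theorem mem_signedDNF_true_imp :
    l ∈ signedDNF true (imp φ ψ) ↔ l ∈ signedDNF false φ ∨ l ∈ signedDNF true ψ := by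
  rw [signedDNF, List.mem_append]

theorem mem_signedDNF_false_imp :
    l ∈ signedDNF false (imp φ ψ) ↔
      ∃ l₁ ∈ signedDNF true φ, ∃ l₂ ∈ signedDNF false ψ, l₁ ++ l₂ = l := by
  simp only [signedDNF, List.mem_flatMap, List.mem_map]

theorem ne_nil_of_mem_signedDNF {b : Bool} (hl : l ∈ signedDNF b φ) : l ≠ [] := by
  induction φ generalizing b l with
  | eq | lt => cases b <;> simp_all [signedDNF]
  | imp φ ψ ihφ ihψ =>
    cases b
    · obtain ⟨l₁, h₁, l₂, -, rfl⟩ := mem_signedDNF_false_imp.1 hl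
      exact List.append_ne_nil_of_left_ne_nil (ihφ h₁) l₂
    · exact (mem_signedDNF_true_imp.1 hl).elim ihφ ihψ

theorem isPPLLiteral_of_mem_signedDNF {b : Bool} (hl : l ∈ signedDNF b φ) (hχ : χ ∈ l) :
    IsPPLLiteral χ := by
  induction φ generalizing b l with
  | eq | lt =>
    cases b <;> obtain rfl := List.mem_singleton.1 hl <;> obtain rfl := List.mem_singleton.1 hχ
    · exact Or.inr ⟨_, by simp [IsPPLAtomic], rfl⟩
    · exact Or.inl (by simp [IsPPLAtomic])
  | imp φ ψ ihφ ihψ =>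
    cases b
    · obtain ⟨l₁, h₁, l₂, h₂, rfl⟩ := mem_signedDNF_false_imp.1 hl
      exact (List.mem_append.1 hχ).elim (ihφ h₁) (ihψ h₂)
    · exact (mem_signedDNF_true_imp.1 hl).elim (ihφ · hχ) (ihψ · hχ)

theorem exists_mem_signedDNF_iff (hw : w pbot = false) (φ : PPLForm) (b : Bool) :
    (∃ l ∈ signedDNF b φ, ∀ χ ∈ l, χ.evalAtoms w = true) ↔ φ.evalAtoms w = b := by
  induction φ generalizing b with
  | eq | lt => cases b <;> simp [signedDNF, evalAtoms_pneg, hw]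
  | imp φ ψ ihφ ihψ =>
    cases b
    · rw [evalAtoms_imp, Bool.or_eq_false_iff, Bool.not_eq_false', ← ihφ, ← ihψ]
      simp only [mem_signedDNF_false_imp]
      constructor
      · rintro ⟨_, ⟨l₁, h₁, l₂, h₂, rfl⟩, hl⟩
        exact ⟨⟨l₁, h₁, (List.forall_mem_append.1 hl).1⟩, ⟨l₂, h₂, (List.forall_mem_append.1 hl).2⟩⟩
      · rintro ⟨⟨l₁, h₁, hl₁⟩, ⟨l₂, h₂, hl₂⟩⟩
        exact ⟨l₁ ++ l₂, ⟨l₁, h₁, l₂, h₂, rfl⟩, List.forall_mem_append.2 ⟨hl₁, hl₂⟩⟩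
    · rw [evalAtoms_imp, Bool.or_eq_true, Bool.not_eq_true', ← ihφ, ← ihψ]
      simp only [mem_signedDNF_true_imp, or_and_right, exists_or]

theorem evalAtoms_pBigDisj_signedDNF (hw : w pbot = false) (φ : PPLForm) :
    (pBigDisj ((signedDNF true φ).map pBigConj)).evalAtoms w = φ.evalAtoms w := by
  rw [Bool.eq_iff_iff, ← exists_mem_signedDNF_iff hw φ true, evalAtoms_pBigDisj hw, List.any_map,
    List.any_eq_true]
  refine exists_congr fun l => and_congr_right fun hl => ?_
  rw [Function.comp_apply, evalAtoms_pBigConj hw (ne_nil_of_mem_signedDNF hl), List.all_eq_true]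

theorem pplTaut_piff_signedDNF (φ : PPLForm) :
    PPLTaut (piff φ (pBigDisj ((signedDNF true φ).map pBigConj))) :=
  pplTaut_piff fun _ hw => (evalAtoms_pBigDisj_signedDNF hw φ).symm

end PPLForm

end

/-- every PPL formula `φ` is provably equivalent to a disjunction of
conjunctions of PPL literals; moreover, if `φ` is consistent then so is at least one of
the disjuncts. -/
theorem ppl_dnf (φ : PPLForm) :
    ∃ d : List (List PPLForm),
      (∀ l ∈ d, ∀ χ ∈ l, IsPPLLiteral χ) ∧
      PPLderiv ∅ (piff φ (pBigDisj (d.map pBigConj))) ∧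
      (¬ PPLderiv {φ} pbot → ∃ l ∈ d, ¬ PPLderiv {pBigConj l} pbot) := by
  have hequiv : PPLderiv ∅ (piff φ (pBigDisj ((PPLForm.signedDNF true φ).map pBigConj))) :=
    .taut φ.pplTaut_piff_signedDNF
  have hrefute : PPLderiv {φ} pbot ↔
      ∀ l ∈ PPLForm.signedDNF true φ, PPLderiv {pBigConj l} pbot := by
    rw [← PPLderiv.pneg_iff_singleton, PPLderiv.pneg_congr hequiv, PPLderiv.pneg_pBigDisj_iff,
      List.forall_mem_map]
    simp only [PPLderiv.pneg_iff_singleton]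
  refine ⟨PPLForm.signedDNF true φ, fun _ hl _ hχ => PPLForm.isPPLLiteral_of_mem_signedDNF hl hχ,
    hequiv, fun hφ => ?_⟩
  simpa [hrefute] using hφ
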